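/- Let 𝒫 = (P, μ, σ) be an n-dimensional system. For every q ∈ [1, n/(n−1)] there exists a constant C_{P,q} > 0 such that for every non-negative convex function u : P → [0,∞] one has (∫_P u^q dμ)^{1/q} ≤ C_{P,q} · ∫_{∂P} u dσ. -/

import Mathlib

open MeasureTheory Filter Topology
open scoped ENNReal NNReal

noncomputable section

abbrev Euc (n : ℕ) := EuclideanSpace ℝ (Fin n)

/-- A `[0,∞]`-valued function on a set `K ⊆ ℝⁿ` is convex if
`u((1−t)x+ty) ≤ (1−t)u(x)+t·u(y)` in `[0,∞]` for all `x, y ∈ K` and `t ∈ [0,1]`. -/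
def ConvexFnOn {n : ℕ} (K : Set (Euc n)) (u : Euc n → ℝ≥0∞) : Prop :=
  ∀ ⦃x⦄, x ∈ K → ∀ ⦃y⦄, y ∈ K → ∀ ⦃t : ℝ⦄, 0 ≤ t → t ≤ 1 →
    u ((1 - t) • x + t • y) ≤ ENNReal.ofReal (1 - t) * u x + ENNReal.ofReal t * u y

/-- A polytope: a compact set with nonempty interior which is a finite
intersection of closed half-spaces (cut out by nonzero affine functions). -/
def IsPolytope {n : ℕ} (P : Set (Euc n)) : Prop :=
  IsCompact P ∧ (interior P).Nonempty ∧
    ∃ (m : ℕ) (L : Fin m → (Euc n →ᵃ[ℝ] ℝ)),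
      (∀ k, L k ≠ 0) ∧ P = ⋂ k, {x | 0 ≤ L k x}

/-- `F` is a face of `P`: the intersection of `P` with the zero locus of a
nonzero affine function that is nonnegative on `P`. -/
def IsFaceOf {n : ℕ} (P F : Set (Euc n)) : Prop :=
  ∃ ℓ : Euc n →ᵃ[ℝ] ℝ, ℓ ≠ 0 ∧ (∀ y ∈ P, 0 ≤ ℓ y) ∧ F = {y ∈ P | ℓ y = 0}

/-- A facet: a face spanning an affine subspace of dimension `n − 1`. -/
def IsFacetOf {n : ℕ} (P F : Set (Euc n)) : Prop :=
  IsFaceOf P F ∧ Module.finrank ℝ (vectorSpan ℝ F) + 1 = n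

/-- A simple polytope: every vertex lies on exactly `n` facets. -/
def IsSimplePolytope {n : ℕ} (P : Set (Euc n)) : Prop :=
  IsPolytope P ∧ ∀ v : Euc n, IsFaceOf P {v} →
    {F : Set (Euc n) | IsFacetOf P F ∧ v ∈ F}.ncard = n

/-- An `n`-dimensional system `𝒫 = (P, μ, σ)`: a simple polytope `P ⊆ ℝⁿ`, a flat
measure `μ` on `P` (a positive constant multiple of Lebesgue measure restricted
to `P`), and a flat measure `σ` on `∂P` (supported on the boundary and, on each
facet, a positive constant multiple of `(n−1)`-dimensional Hausdorff measure). -/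
structure NSystem (n : ℕ) where
  P : Set (Euc n)
  μ : Measure (Euc n)
  σ : Measure (Euc n)
  simple : IsSimplePolytope P
  flat : ∃ c : ℝ, 0 < c ∧ μ = ENNReal.ofReal c • volume.restrict P
  bdry_supp : σ (frontier P)ᶜ = 0
  flat_bdry : ∀ F : Set (Euc n), IsFacetOf P F →
    ∃ c : ℝ, 0 < c ∧ σ.restrict F =
      ENNReal.ofReal c • (Measure.hausdorffMeasure ((n : ℝ) - 1)).restrict F

/-- Projection along `v` onto the zero set of `l`. -/
def sproj {n : ℕ} (l : Euc n →ᵃ[ℝ] ℝ) (v : Euc n) : Euc n →ᵃ[ℝ] Euc n :=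
  AffineMap.id ℝ (Euc n) -
    (LinearMap.toSpanSingleton ℝ (Euc n) v).toAffineMap.comp ((l.linear v)⁻¹ • l)

lemma sproj_apply {n : ℕ} (l : Euc n →ᵃ[ℝ] ℝ) (v x : Euc n) :
    sproj l v x = x - (l x / l.linear v) • v := by
  simp [sproj, div_eq_inv_mul]

lemma aff_add_smul {n : ℕ} (l : Euc n →ᵃ[ℝ] ℝ) (v x : Euc n) (t : ℝ) :
    l (x + t • v) = l x + t * l.linear v := by
  have := l.map_vadd x (t • v)
  simp only [vadd_eq_add, map_smul, smul_eq_mul] at this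
  rw [add_comm x, this, add_comm]

lemma sproj_add {n : ℕ} (l : Euc n →ᵃ[ℝ] ℝ) (v x : Euc n) (t : ℝ) (h : l.linear v ≠ 0) :
    sproj l v (x + t • v) = sproj l v x := by
  rw [sproj_apply, sproj_apply, aff_add_smul, add_div, mul_div_cancel_right₀ _ h, add_smul]
  abel

/-- lower semicontinuous hull of `u` on `P` -/
def hull {n : ℕ} (P : Set (Euc n)) (u : Euc n → ℝ≥0∞) (x : Euc n) : ℝ≥0∞ :=
  liminf u (𝓝[P] x)

lemma hull_measurable {n : ℕ} (P : Set (Euc n)) (u : Euc n → ℝ≥0∞) :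
    Measurable (hull P u) := by
  apply LowerSemicontinuous.measurable
  intro x c hc
  obtain ⟨d, hcd, hd⟩ := exists_between hc
  have h := eventually_lt_of_lt_liminf hd
  have h2 := eventually_eventually_nhdsWithin.2 h
  rw [eventually_nhdsWithin_iff] at h
  have h3 := eventually_eventually_nhds.2 h
  filter_upwards [h3] with y hy
  rw [← eventually_nhdsWithin_iff] at hy
  exact hcd.trans_le (le_liminf_of_le (by isBoundedDefault) (hy.mono fun _ h => h.le))

lemma hull_le {n : ℕ} {P : Set (Euc n)} (u : Euc n → ℝ≥0∞) {x : Euc n} (hx : x ∈ P) :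
    hull P u x ≤ u x := by
  by_contra! h
  have h := eventually_lt_of_lt_liminf h
  exact lt_irrefl _ (h.self_of_nhdsWithin hx)

lemma quasi {n : ℕ} {P : Set (Euc n)} {u : Euc n → ℝ≥0∞} (hu : ConvexFnOn P u) {x y : Euc n}
    (hx : x ∈ P) (hy : y ∈ P) {t : ℝ} (h0 : 0 ≤ t) (h1 : t ≤ 1) {c : ℝ≥0∞} (hxc : u x ≤ c)
    (hyc : u y ≤ c) : u ((1 - t) • x + t • y) ≤ c := by
  refine (hu hx hy h0 h1).trans ?_
  calc _ ≤ ENNReal.ofReal (1 - t) * c + ENNReal.ofReal t * c := by gcongr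
    _ = c := by
      rw [← add_mul, ← ENNReal.ofReal_add (by linarith) h0]; simp

lemma hull_quasi {n : ℕ} {P : Set (Euc n)} (hP : Convex ℝ P) {u : Euc n → ℝ≥0∞}
    (hu : ConvexFnOn P u) {x y : Euc n} {t : ℝ} (h0 : 0 ≤ t) (h1 : t ≤ 1) :
    hull P u ((1 - t) • x + t • y) ≤ max (hull P u x) (hull P u y) := by
  by_contra! h
  obtain ⟨c, hc, hc2⟩ := exists_between h
  have e := eventually_lt_of_lt_liminf hc2
  have fx := frequently_lt_of_liminf_lt (by isBoundedDefault) ((le_max_left _ _).trans_lt hc)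
  have fy := frequently_lt_of_liminf_lt (by isBoundedDefault) ((le_max_right _ _).trans_lt hc)
  have T : Tendsto (fun p : Euc n × Euc n => (1 - t) • p.1 + t • p.2) (𝓝[P] x ×ˢ 𝓝[P] y)
      (𝓝[P] ((1 - t) • x + t • y)) := by
    rw [← nhdsWithin_prod_eq]
    apply tendsto_nhdsWithin_of_tendsto_nhds_of_eventually_within
    · apply Tendsto.mono_left _ nhdsWithin_le_nhds
      exact Continuous.tendsto (f := fun p : Euc n × Euc n => (1 - t) • p.1 + t • p.2)
        (by fun_prop) (x, y)
    · filter_upwards [self_mem_nhdsWithin] with p hp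
      exact hP hp.1 hp.2 (by linarith) h0 (by ring)
  have e2 := T.eventually e
  obtain ⟨A, hA, B, hB, hAB⟩ := eventually_prod_iff.1 e2
  obtain ⟨a, ha, ha1, ha2⟩ := (fx.and_eventually (hA.and self_mem_nhdsWithin)).exists
  obtain ⟨b, hb, hb1, hb2⟩ := (fy.and_eventually (hB |>.and self_mem_nhdsWithin)).exists
  exact (hAB ha1 hb1).not_ge (quasi hu ha2 hb2 h0 h1 ha.le hb.le)

lemma hull_ae {n : ℕ} {P : Set (Euc n)} (hP : Convex ℝ P) {u : Euc n → ℝ≥0∞}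
    (hu : ConvexFnOn P u) : ∀ᵐ x : Euc n, x ∈ P → u x = hull P u x := by
  have key : ∀ r : ℝ≥0, ∀ᵐ x : Euc n, x ∉ frontier {x ∈ P | u x ≤ r} := by
    intro r
    have hc : Convex ℝ {x ∈ P | u x ≤ r} := by
      intro x hx y hy a b ha hb hab
      refine ⟨hP hx.1 hy.1 ha hb hab, ?_⟩
      have : a = 1 - b := by linarith
      subst this
      exact quasi hu hx.1 hy.1 hb (by linarith) hx.2 hy.2
    rw [ae_iff]
    simpa using hc.addHaar_frontier volume
  have key2 : ∀ᵐ x : Euc n, ∀ r : ℚ, x ∉ frontier {x ∈ P | u x ≤ (r : ℝ).toNNReal} :=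
    ae_all_iff.2 fun r => key _
  filter_upwards [key2] with x hx hxP
  refine le_antisymm ?_ (hull_le u hxP)
  by_contra! h
  obtain ⟨r, hr0, hr1, hr2⟩ := ENNReal.lt_iff_exists_rat_btwn.1 h
  have f := frequently_lt_of_liminf_lt (by isBoundedDefault) hr1
  have f2 := f.and_eventually self_mem_nhdsWithin
  apply hx r
  rw [frontier]
  refine ⟨?_, fun hi => ?_⟩
  · rw [mem_closure_iff_frequently]
    exact (f2.filter_mono nhdsWithin_le_nhds).mono fun y hy => ⟨hy.2, hy.1.le⟩
  · exact (interior_subset hi).2.not_gt hr2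

lemma slab_le {m : ℕ} (i : Fin (m + 1)) (A : Set (Euc (m + 1))) (s : Euc (m + 1) → Euc (m + 1))
    (hs : ∀ x, ∀ j, j ≠ i → s x j = x j) :
    volume {x : Euc (m + 1) | x i ∈ Set.Icc (0 : ℝ) 1 ∧ s x ∈ A} ≤
      Measure.hausdorffMeasure (m : ℝ) A := by
  let π : Euc (m + 1) → (Fin m → ℝ) := fun x j => x (i.succAbove j)
  have hπ : LipschitzWith 1 π := by
    apply LipschitzWith.of_dist_le_mul
    intro x y
    simp only [NNReal.coe_one, one_mul]
    rw [dist_pi_le_iff dist_nonneg]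
    intro j
    exact PiLp.dist_apply_le x y _
  have h1 : volume (π '' A) ≤ Measure.hausdorffMeasure (m : ℝ) A := by
    have := hπ.hausdorffMeasure_image_le (d := (m : ℝ)) (by positivity) A
    have h2 := hausdorffMeasure_pi_real (ι := Fin m)
    rw [Fintype.card_fin] at h2
    rw [h2] at this
    simpa using this
  refine le_trans ?_ h1
  have mp := (volume_preserving_piFinSuccAbove (fun _ : Fin (m + 1) => ℝ) i).comp
    (PiLp.volume_preserving_ofLp (Fin (m + 1)))
  calc volume {x : Euc (m + 1) | x i ∈ Set.Icc (0 : ℝ) 1 ∧ s x ∈ A}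
      ≤ volume ((MeasurableEquiv.piFinSuccAbove (fun _ : Fin (m + 1) => ℝ) i ∘
          (WithLp.ofLp (p := 2))) ⁻¹' (Set.Icc (0 : ℝ) 1 ×ˢ (π '' A))) := by
        apply measure_mono
        rintro x ⟨hx, hA⟩
        refine ⟨hx, s x, hA, ?_⟩
        funext j
        exact hs x _ (Fin.succAbove_ne i j)
    _ = volume (Set.Icc (0 : ℝ) 1 ×ˢ (π '' A)) := by
        apply mp.measure_preimage_equiv (f := (MeasurableEquiv.toLp 2 _).symm.trans (MeasurableEquiv.piFinSuccAbove (fun _ : Fin (m + 1) => ℝ) i))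
    _ ≤ volume (π '' A) := by
        rw [Measure.volume_eq_prod, Measure.prod_prod]; simp

lemma facet_or_null {n : ℕ} {P : Set (Euc n)} (l : Euc n →ᵃ[ℝ] ℝ) (hl : ∀ y ∈ P, 0 ≤ l y)
    (v : Euc n) (hv : l.linear v ≠ 0) :
    IsFacetOf P {y ∈ P | l y = 0} ∨ volume {x | sproj l v x ∈ {y ∈ P | l y = 0}} = 0 := by
  set F := {y ∈ P | l y = 0} with hF
  by_cases hT : (affineSpan ℝ F).comap (sproj l v) = ⊤
  · left
    refine ⟨⟨l, ?_, hl, rfl⟩, ?_⟩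
    · rintro rfl; simp at hv
    · have e : vectorSpan ℝ F = LinearMap.ker l.linear := by
        apply le_antisymm
        · rw [vectorSpan_def, Submodule.span_le]
          rintro _ ⟨a, ha, b, hb, rfl⟩
          have := l.linearMap_vsub a b
          simp only [SetLike.mem_coe, LinearMap.mem_ker]
          rw [this, ha.2, hb.2]; simp
        · intro w hw
          have h1 : sproj l v (0 + (1 : ℝ) • w) ∈ affineSpan ℝ F := by
            rw [← AffineSubspace.mem_comap, hT]; trivial
          have h2 : sproj l v 0 ∈ affineSpan ℝ F := by
            rw [← AffineSubspace.mem_comap, hT]; trivial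
          have h3 := AffineSubspace.vsub_mem_direction h1 h2
          rw [direction_affineSpan] at h3
          have hw0 : l.linear w = 0 := hw
          convert h3 using 1
          rw [sproj_apply, sproj_apply, aff_add_smul, hw0]
          simp
      have hn := LinearMap.finrank_range_add_finrank_ker l.linear
      have hs : LinearMap.range l.linear = ⊤ := by
        rw [LinearMap.range_eq_top]
        apply LinearMap.surjective
        rintro h; simp [h] at hv
      rw [hs, finrank_top, Module.finrank_self, finrank_euclideanSpace_fin] at hn
      rw [e]; omega
  · right
    refine measure_mono_null ?_ (Measure.addHaar_affineSubspace volume _ hT)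
    intro x hx
    exact subset_affineSpan ℝ F hx

lemma exit_pt {n m : ℕ} {P : Set (Euc n)} (hb : Bornology.IsBounded P)
    (L : Fin m → (Euc n →ᵃ[ℝ] ℝ)) (hP : P = ⋂ k, {x | 0 ≤ L k x}) {v : Euc n} (hv : v ≠ 0)
    {x : Euc n} (hx : x ∈ P) :
    ∃ k, (L k).linear v < 0 ∧ ∃ t : ℝ, 0 ≤ t ∧ sproj (L k) v x = x + t • v ∧
      x + t • v ∈ P ∧ L k (x + t • v) = 0 := by
  have hx' : ∀ k, 0 ≤ L k x := by rw [hP] at hx; simpa using hx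
  have hne : (Finset.univ.filter fun k => (L k).linear v < 0).Nonempty := by
    by_contra! h
    have h' : ∀ k, 0 ≤ (L k).linear v := by
      intro k; by_contra! hk
      have : k ∈ (Finset.univ.filter fun k => (L k).linear v < 0) := by simpa using hk
      rw [h] at this; simp at this
    have hray : ∀ t : ℝ, 0 ≤ t → x + t • v ∈ P := by
      intro t ht
      rw [hP]; simp only [Set.mem_iInter, Set.mem_ofPred_eq]
      intro k; rw [aff_add_smul]
      have := mul_nonneg ht (h' k); linarith [hx' k]
    obtain ⟨R, hR⟩ := hb.exists_norm_le
    have hv' : 0 < ‖v‖ := norm_pos_iff.2 hv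
    have hR0 : 0 ≤ R := (norm_nonneg _).trans (hR x hx)
    have h1 := hR _ (hray ((2 * R + 1) / ‖v‖) (by positivity))
    have h2 := norm_sub_le (x + ((2 * R + 1) / ‖v‖) • v) x
    rw [add_sub_cancel_left, norm_smul, Real.norm_of_nonneg (by positivity),
      div_mul_cancel₀ _ hv'.ne'] at h2
    linarith [hR x hx]
  obtain ⟨k, hk, hmin⟩ := Finset.exists_min_image _ (fun k => L k x / (-(L k).linear v)) hne
  simp only [Finset.mem_filter, Finset.mem_univ, true_and] at hk hmin
  have ht : 0 ≤ L k x / (-(L k).linear v) := div_nonneg (hx' k) (by linarith)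
  refine ⟨k, hk, _, ht, ?_, ?_, ?_⟩
  · rw [sproj_apply, div_neg, neg_smul, sub_eq_add_neg]
  · rw [hP]; simp only [Set.mem_iInter, Set.mem_ofPred_eq]
    intro j; rw [aff_add_smul]
    by_cases hj : (L j).linear v < 0
    · have := hmin j hj
      rw [le_div_iff₀ (by linarith)] at this
      linarith
    · have := mul_nonneg ht (not_lt.1 hj); linarith [hx' j]
  · rw [aff_add_smul]; field_simp [hk.ne]; ring

lemma sproj_neg {n : ℕ} (l : Euc n →ᵃ[ℝ] ℝ) (v x : Euc n) : sproj l (-v) x = sproj l v x := by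
  simp [sproj_apply, div_neg]

lemma facet_bound {m : ℕ} (S : NSystem (m + 1)) (l : Euc (m + 1) →ᵃ[ℝ] ℝ)
    (hl : ∀ y ∈ S.P, 0 ≤ l y) (i : Fin (m + 1))
    (hv : l.linear (EuclideanSpace.single i 1) ≠ 0) :
    ∃ C : ℝ≥0, ∀ h : Euc (m + 1) → ℝ≥0∞, Measurable h →
      ∫⁻ x in {x : Euc (m + 1) | x i ∈ Set.Icc (0 : ℝ) 1},
        Set.indicator {y ∈ S.P | l y = 0} h (sproj l (EuclideanSpace.single i 1) x)
      ≤ C * ∫⁻ x in {y ∈ S.P | l y = 0}, h x ∂S.σ := by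
  set v : Euc (m + 1) := EuclideanSpace.single i 1 with hvdef
  have hsm : Measurable (sproj l v) :=
    (AffineMap.continuous_of_finiteDimensional _).measurable
  have hFm : MeasurableSet {y ∈ S.P | l y = 0} :=
    (S.simple.1.1.isClosed.inter
      (isClosed_singleton.preimage (AffineMap.continuous_of_finiteDimensional l))).measurableSet
  rcases facet_or_null l hl v hv with hf | hf
  · obtain ⟨c, hc, hσ⟩ := S.flat_bdry _ hf
    rw [show (((m + 1 : ℕ) : ℝ) - 1) = m by push_cast; ring] at hσ
    refine ⟨(Real.toNNReal c)⁻¹, fun h hh => ?_⟩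
    set F := {y ∈ S.P | l y = 0}
    have hle : Measure.map (sproj l v)
        (volume.restrict {x : Euc (m + 1) | x i ∈ Set.Icc (0 : ℝ) 1}) ≤
        Measure.hausdorffMeasure (m : ℝ) := by
      rw [Measure.le_iff]
      intro A hA
      rw [Measure.map_apply hsm hA, Measure.restrict_apply (hsm hA)]
      refine le_trans (measure_mono ?_) (slab_le i A (sproj l v) ?_)
      · intro x hx; exact ⟨hx.2, hx.1⟩
      · intro x j hj
        simp [sproj_apply, hvdef, hj]
    rw [← lintegral_map (hh.indicator hFm) hsm, lintegral_indicator hFm, hσ,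
      lintegral_smul_measure, smul_eq_mul, ← mul_assoc]
    have : ((Real.toNNReal c)⁻¹ : ℝ≥0) * ENNReal.ofReal c = 1 := by
      rw [ENNReal.ofReal, ← ENNReal.coe_mul, inv_mul_cancel₀]; · simp
      simpa using hc
    rw [this, one_mul]
    exact lintegral_mono' (Measure.restrict_mono le_rfl hle) le_rfl
  · refine ⟨0, fun h hh => ?_⟩
    simp only [ENNReal.coe_zero, zero_mul, nonpos_iff_eq_zero]
    apply lintegral_eq_zero_of_ae_eq_zero
    apply ae_restrict_of_ae
    have : ∀ᵐ x, ¬ (sproj l v x ∈ {y ∈ S.P | l y = 0}) := by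
      rw [ae_iff]; simpa using hf
    filter_upwards [this] with x hx
    exact Set.indicator_of_notMem (s := {y ∈ S.P | l y = 0}) (a := sproj l v x) hx h

lemma polytope_convex {n m : ℕ} {P : Set (Euc n)}
    (L : Fin m → (Euc n →ᵃ[ℝ] ℝ)) (hP : P = ⋂ k, {x | 0 ≤ L k x}) : Convex ℝ P := by
  rw [hP]
  refine convex_iInter fun k => ?_
  exact (convex_Ici (0 : ℝ)).affine_preimage (L k)

/-- fibre sum -/
def gterm {n : ℕ} (P : Set (Euc n)) (l : Euc n →ᵃ[ℝ] ℝ) (v : Euc n) (h : Euc n → ℝ≥0∞)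
    (x : Euc n) : ℝ≥0∞ :=
  open Classical in
  if l.linear v ≠ 0 then Set.indicator {y ∈ P | l y = 0} h (sproj l v x) else 0

lemma gterm_add {n : ℕ} (P : Set (Euc n)) (l : Euc n →ᵃ[ℝ] ℝ) (v : Euc n) (h : Euc n → ℝ≥0∞)
    (x : Euc n) (t : ℝ) : gterm P l v h (x + t • v) = gterm P l v h x := by
  unfold gterm
  split_ifs with hc
  · rw [sproj_add _ _ _ _ hc]
  · rfl

lemma gterm_measurable {n : ℕ} {P : Set (Euc n)} (hP : IsClosed P) (l : Euc n →ᵃ[ℝ] ℝ) (v : Euc n)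
    {h : Euc n → ℝ≥0∞} (hh : Measurable h) : Measurable (gterm P l v h) := by
  unfold gterm
  have hFm : MeasurableSet {y ∈ P | l y = 0} :=
    (hP.inter
      (isClosed_singleton.preimage (AffineMap.continuous_of_finiteDimensional l))).measurableSet
  split_ifs with hc
  · exact (hh.indicator hFm).comp (AffineMap.continuous_of_finiteDimensional _).measurable
  · exact measurable_const

lemma hull_le_sum {n m : ℕ} {P : Set (Euc n)} (hb : Bornology.IsBounded P)
    (L : Fin m → (Euc n →ᵃ[ℝ] ℝ)) (hP : P = ⋂ k, {x | 0 ≤ L k x}) {v : Euc n} (hv : v ≠ 0)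
    {u : Euc n → ℝ≥0∞} (hu : ConvexFnOn P u) {x : Euc n} (hx : x ∈ P) :
    hull P u x ≤ ∑ k, gterm P (L k) v (hull P u) x := by
  obtain ⟨k, hk, t, ht, hst, htP, hkt⟩ := exit_pt hb L hP hv hx
  obtain ⟨k', hk', t', ht', hst', htP', hkt'⟩ := exit_pt hb L hP (neg_ne_zero.2 hv) hx
  have e1 : hull P u (x + t • v) ≤ ∑ k, gterm P (L k) v (hull P u) x := by
    refine le_trans (le_of_eq ?_) (Finset.single_le_sum
      (f := fun k => gterm P (L k) v (hull P u) x) (fun _ _ => zero_le) (Finset.mem_univ k))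
    simp only [gterm]
    rw [if_pos hk.ne, hst, Set.indicator_of_mem]
    exact ⟨htP, hkt⟩
  have e2 : hull P u (x + t' • -v) ≤ ∑ k, gterm P (L k) v (hull P u) x := by
    refine le_trans (le_of_eq ?_) (Finset.single_le_sum
      (f := fun k => gterm P (L k) v (hull P u) x) (fun _ _ => zero_le) (Finset.mem_univ k'))
    simp only [gterm]
    rw [if_pos (by simpa using hk'.ne), ← sproj_neg, hst', Set.indicator_of_mem]
    exact ⟨htP', hkt'⟩
  rcases (add_nonneg ht ht').eq_or_lt with h0 | h0
  · have : t = 0 := by linarith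
    subst this
    simpa using e1
  · have hq := hull_quasi (polytope_convex L hP) hu (x := x + t • v) (y := x + t' • -v)
      (t := t / (t + t')) (by positivity) (by rw [div_le_one h0]; linarith)
    have hxe : (1 - t / (t + t')) • (x + t • v) + (t / (t + t')) • (x + t' • -v) = x := by
      have : (1 - t / (t + t')) = t' / (t + t') := by field_simp; ring
      rw [this]
      have h2 : t' / (t + t') + t / (t + t') = 1 := by field_simp; ring
      calc _ = (t' / (t + t') + t / (t + t')) • x +
            (t' / (t + t') * t - t / (t + t') * t') • v := by module
        _ = x := by
          rw [h2, show t' / (t + t') * t - t / (t + t') * t' = 0 by ring]; simp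
    rw [hxe] at hq
    exact hq.trans (max_le e1 e2)

lemma core {m : ℕ} (hm : 1 ≤ m) (S : NSystem (m + 1)) :
    ∃ C : ℝ≥0, ∀ u : Euc (m + 1) → ℝ≥0∞, ConvexFnOn S.P u →
      ∫⁻ x in S.P, hull S.P u x ^ (((m + 1 : ℕ) : ℝ) / (m : ℝ)) ≤
        (C * ∫⁻ x, u x ∂S.σ) ^ (((m + 1 : ℕ) : ℝ) / (m : ℝ)) := by
  obtain ⟨⟨hcpt, -, N, L, -, hP⟩, -⟩ := S.simple
  have hm0 : (0 : ℝ) < m := by exact_mod_cast hm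
  have hL : ∀ k, ∀ y ∈ S.P, 0 ≤ L k y := by
    intro k y hy; rw [hP] at hy; exact Set.mem_iInter.1 hy k
  let v : Fin (m + 1) → Euc (m + 1) := fun i => EuclideanSpace.single i 1
  have hv : ∀ i, v i ≠ 0 := by intro i; simp [v]
  let slab : Fin (m + 1) → Set (Euc (m + 1)) := fun i => {x | x i ∈ Set.Icc (0 : ℝ) 1}
  have hslab : ∀ i, MeasurableSet (slab i) := by
    intro i
    have : Measurable fun x : Euc (m + 1) => x i := by fun_prop
    exact this measurableSet_Icc
  have hC : ∀ i k, ∃ C : ℝ≥0, ∀ u : Euc (m + 1) → ℝ≥0∞,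
      ∫⁻ x in slab i, gterm S.P (L k) (v i) (hull S.P u) x ≤ C * ∫⁻ x, u x ∂S.σ := by
    intro i k
    by_cases hc : (L k).linear (v i) ≠ 0
    · obtain ⟨C, hC⟩ := facet_bound S (L k) (hL k) i hc
      refine ⟨C, fun u => ?_⟩
      simp only [gterm, if_pos hc]
      refine (hC _ (hull_measurable _ _)).trans ?_
      refine mul_le_mul_right ?_ _
      have hFm : MeasurableSet {y ∈ S.P | L k y = 0} := (hcpt.isClosed.inter (isClosed_singleton.preimage
        (AffineMap.continuous_of_finiteDimensional (L k)))).measurableSet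
      exact (setLIntegral_mono' hFm fun x hx => hull_le u hx.1).trans (setLIntegral_le_lintegral _ _)
    · exact ⟨0, fun u => by simp [gterm, if_neg hc]⟩
  choose C hC using hC
  refine ⟨∑ i, ∑ k, C i k, fun u hu => ?_⟩
  set p : ℝ := ((m + 1 : ℕ) : ℝ) / (m : ℝ) with hp
  have hpc : Real.HolderConjugate (Fintype.card (Fin (m + 1)) : ℝ) p := by
    rw [Real.holderConjugate_iff]
    refine ⟨by simp; omega, ?_⟩
    rw [hp, Fintype.card_fin]; push_cast; field_simp; ring
  let f : Fin (m + 1) → Euc (m + 1) → ℝ≥0∞ := fun i x =>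
    ∑ k, gterm S.P (L k) (v i) (hull S.P u) x
  have hgm : ∀ i k, Measurable (gterm S.P (L k) (v i) (hull S.P u)) := fun i k =>
    gterm_measurable hcpt.isClosed _ _ (hull_measurable _ _)
  have hfm : ∀ i, Measurable (f i) := fun i =>
    Finset.measurable_sum _ fun k _ => hgm i k
  let F : Euc (m + 1) → ℝ≥0∞ := fun x => ∑ i, (slab i).indicator (f i) x
  have hFm : Measurable F := Finset.measurable_sum _ fun i _ => (hfm i).indicator (hslab i)
  have hFint : ∫⁻ x, F x ≤ ((∑ i, ∑ k, C i k : ℝ≥0) : ℝ≥0∞) * ∫⁻ x, u x ∂S.σ := by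
    simp only [F]
    rw [lintegral_finsetSum _ fun i _ => (hfm i).indicator (hslab i)]
    push_cast
    rw [Finset.sum_mul]
    refine Finset.sum_le_sum fun i _ => ?_
    rw [lintegral_indicator (hslab i)]
    simp only [f]
    rw [lintegral_finsetSum _ fun k _ => hgm i k, Finset.sum_mul]
    exact Finset.sum_le_sum fun k _ => hC i k u
  have mp := PiLp.volume_preserving_toLp (Fin (m + 1))
  have hml : Measurable (WithLp.toLp 2 : (Fin (m + 1) → ℝ) → Euc (m + 1)) := mp.measurable
  have grid := lintegral_prod_lintegral_pow_le (fun _ : Fin (m + 1) => (volume : Measure ℝ)) hpc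
    (f := fun y => F (WithLp.toLp 2 y)) (hFm.comp hml)
  rw [← volume_pi, mp.lintegral_comp hFm] at grid
  refine le_trans ?_ (grid.trans (ENNReal.rpow_le_rpow hFint (by positivity)))
  have hPm := hcpt.isClosed.measurableSet
  rw [← lintegral_indicator hPm, ← mp.lintegral_comp
    (((hull_measurable S.P u).pow_const p).indicator hPm)]
  refine lintegral_mono fun y => ?_
  refine Set.indicator_apply_le' (fun hy => ?_) (fun _ => zero_le)
  have key : ∀ i, hull S.P u (WithLp.toLp 2 y) ≤
      ∫⁻ t : ℝ, F (WithLp.toLp 2 (Function.update y i t)) := by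
    intro i
    refine (hull_le_sum hcpt.isBounded L hP (hv i) hu hy).trans ?_
    have : f i (WithLp.toLp 2 y) = ∫⁻ t : ℝ in Set.Icc 0 1, f i (WithLp.toLp 2 y) := by simp
    change f i (WithLp.toLp 2 y) ≤ _
    rw [this, ← lintegral_indicator measurableSet_Icc]
    refine lintegral_mono fun t => ?_
    refine Set.indicator_apply_le' (fun ht => ?_) (fun _ => zero_le)
    refine le_trans (le_of_eq ?_) (Finset.single_le_sum
      (f := fun j => (slab j).indicator (f j) (WithLp.toLp 2 (Function.update y i t)))
      (fun _ _ => zero_le) (Finset.mem_univ i))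
    · have h1 : WithLp.toLp 2 (Function.update y i t) ∈ slab i := by simpa [slab] using ht
      simp only
      rw [Set.indicator_of_mem h1]
      have h2 : (WithLp.toLp 2 (Function.update y i t) : Euc (m + 1)) =
          WithLp.toLp 2 y + (t - y i) • v i := by
        ext j
        by_cases hj : j = i
        · subst hj; simp [v]
        · simp [v, hj]
      simp only [f, h2, gterm_add]
  calc hull S.P u (WithLp.toLp 2 y) ^ p
      = ∏ i : Fin (m + 1), hull S.P u (WithLp.toLp 2 y) ^
          ((1 : ℝ) / ((Fintype.card (Fin (m + 1)) : ℝ) - 1)) := by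
        rw [Finset.prod_const, ← ENNReal.rpow_natCast, ← ENNReal.rpow_mul]
        congr 1
        rw [hp]; simp; field_simp
    _ ≤ _ := by
        refine Finset.prod_le_prod' fun i _ => ?_
        refine ENNReal.rpow_le_rpow (key i) ?_
        simp

/-- Poincaré type estimate: for an `n`-dimensional system `𝒫 = (P, μ, σ)` and
every `q ∈ [1, n/(n−1)]` there is a constant `C_{P,q} > 0` with
`(∫_P u^q dμ)^{1/q} ≤ C_{P,q} ∫_{∂P} u dσ` for every non-negative convex `u`. -/
theorem poincare_type_estimate (n : ℕ) (S : NSystem n) :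
    ∀ q : ℝ, 1 ≤ q → q ≤ (n : ℝ) / ((n : ℝ) - 1) →
      ∃ C : ℝ, 0 < C ∧
        ∀ u : Euc n → ℝ≥0∞, ConvexFnOn S.P u →
          (∫⁻ x in S.P, u x ^ q ∂S.μ) ^ (1 / q)
            ≤ ENNReal.ofReal C * ∫⁻ x in frontier S.P, u x ∂S.σ := by
  intro q hq1 hq2
  rcases n with _ | m
  · norm_num at hq2; linarith
  rcases Nat.eq_zero_or_pos m with rfl | hm
  · norm_num at hq2; linarith
  have hm0 : (0 : ℝ) < m := by exact_mod_cast hm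
  rw [show ((m + 1 : ℕ) : ℝ) - 1 = m by push_cast; ring] at hq2
  obtain ⟨C, hC⟩ := core hm S
  set p : ℝ := ((m + 1 : ℕ) : ℝ) / (m : ℝ) with hp
  have hp0 : 0 < p := by linarith
  have hq0 : 0 < q := by linarith
  obtain ⟨c, hc, hμ⟩ := S.flat
  obtain ⟨⟨hcpt, -, N, L, -, hP⟩, -⟩ := S.simple
  have hPm := hcpt.isClosed.measurableSet
  set V := volume S.P with hV
  have hVt : V ≠ ∞ := hcpt.measure_lt_top.ne
  set K : ℝ≥0∞ := ENNReal.ofReal c ^ (1 / q) * (C * V ^ (1 / q - 1 / p)) with hK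
  have hqp : 0 ≤ 1 / q - 1 / p := sub_nonneg.2 (one_div_le_one_div_of_le hq0 hq2)
  have hKt : K ≠ ∞ := by
    refine ENNReal.mul_ne_top (ENNReal.rpow_ne_top_of_nonneg (by positivity) (by simp))
      (ENNReal.mul_ne_top (by simp) (ENNReal.rpow_ne_top_of_nonneg hqp hVt))
  refine ⟨K.toReal + 1, by positivity, fun u hu => ?_⟩
  have hσ : S.σ.restrict (frontier S.P) = S.σ :=
    Measure.restrict_eq_self_of_ae_mem (by rw [ae_iff]; exact S.bdry_supp)
  rw [hσ]
  have hle : K ≤ ENNReal.ofReal (K.toReal + 1) := by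
    rw [ENNReal.ofReal_add (by positivity) (by positivity), ENNReal.ofReal_toReal hKt]
    exact le_self_add
  refine le_trans ?_ (mul_le_mul_left hle _)
  have e1 : ∫⁻ x in S.P, u x ^ q ∂S.μ =
      ENNReal.ofReal c * ∫⁻ x in S.P, hull S.P u x ^ q := by
    rw [hμ, Measure.restrict_smul, Measure.restrict_restrict hPm, Set.inter_self,
      lintegral_smul_measure, smul_eq_mul]
    congr 1
    refine setLIntegral_congr_fun_ae hPm ?_
    filter_upwards [hull_ae (polytope_convex L hP) hu] with x hx hxP
    rw [hx hxP]
  have e2 := eLpNorm'_le_eLpNorm'_mul_rpow_measure_univ (μ := volume.restrict S.P) hq0 hq2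
    (hull_measurable S.P u).aestronglyMeasurable
  simp only [eLpNorm', enorm_eq_self, Measure.restrict_apply_univ] at e2
  have e3 := ENNReal.rpow_le_rpow (hC u hu) (z := 1 / p) (by positivity)
  rw [← ENNReal.rpow_mul, mul_one_div_cancel hp0.ne', ENNReal.rpow_one] at e3
  rw [e1, ENNReal.mul_rpow_of_nonneg _ _ (by positivity), hK]
  calc _ ≤ ENNReal.ofReal c ^ (1 / q) * ((C * ∫⁻ x, u x ∂S.σ) * V ^ (1 / q - 1 / p)) := by
        gcongr
        exact e2.trans (mul_le_mul_left e3 _)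
    _ = _ := by ring

end
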